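/- arXiv:0810.3810 — 2 statements merged into one kernel-verified Lean document; each statement's English description precedes it below -/
import Mathlib

section
/- Let u = u(t,x) be a C^2 solution of the strictly hyperbolic system ∂u/∂t + A(u) ∂u/∂x = B(u) on a domain where |u| remains in the neighborhood of 0 under consideration, and set v_i = l_i(u)u, w_i = l_i(u)u_x, b_i(u) = l_i(u)B(u). Then for each i = 1,…,n the following divergence-form identities hold: ∂v_i/∂t + ∂(λ_i(u) v_i)/∂x = Σ_{j,k=1}^n β̃_{ijk}(u) v_j w_k + Σ_{j,k=1}^n ν_{ijk}(u) v_j b_k(u) + b_i(u), and ∂w_i/∂t + ∂(λ_i(u) w_i)/∂x = Σ_{j,k=1}^n γ̃_{ijk}(u) w_j w_k + Σ_{j,k=1}^n σ_{ijk}(u) w_j b_k(u) + (b_i(u))_x, where β̃_{ijk}(u) = β_{ijk}(u) + ∇λ_i(u) r_k(u) δ_ij and γ̃_{ijk}(u) = γ_{ijk}(u) + (1/2)[∇λ_j(u) r_k(u) δ_ij + ∇λ_k(u) r_j(u) δ_ik]. -/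
open scoped ENNReal
open MeasureTheory Matrix Set Filter Topology

noncomputable section

/-- The state space `ℝⁿ`, realized as `Fin n → ℝ`. -/
abbrev V (n : ℕ) := Fin n → ℝ

/-- The Euclidean norm on `Fin n → ℝ`. -/
def eunorm {n : ℕ} (v : V n) : ℝ := Real.sqrt (∑ i, v i ^ 2)

/-- The `i`-th standard basis vector `e_i`. -/
def eb {n : ℕ} (i : Fin n) : V n := Pi.single i 1

/-- A first-order quasilinear strictly hyperbolic system
`∂u/∂t + A(u) ∂u/∂x = B(u)`, with suitably smooth coefficients on the
neighborhood `{|u| < δ}` of `u = 0`, real distinct eigenvalues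
`λ_1(u) < ⋯ < λ_n(u)` and complete systems of left/right eigenvectors
normalized by `l_i(u) r_j(u) ≡ δ_ij`, `r_i(u)ᵀ r_i(u) ≡ 1`. -/
structure HypSys (n : ℕ) where
  A : V n → Matrix (Fin n) (Fin n) ℝ
  B : V n → V n
  lam : Fin n → V n → ℝ
  l : Fin n → V n → V n
  r : Fin n → V n → V n
  δ : ℝ
  δ_pos : 0 < δ
  smooth_A : ∀ i j : Fin n, ContDiffOn ℝ (⊤ : ℕ∞) (fun u => A u i j) {u | eunorm u < δ}
  smooth_B : ContDiffOn ℝ (⊤ : ℕ∞) B {u | eunorm u < δ}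
  smooth_lam : ∀ i : Fin n, ContDiffOn ℝ (⊤ : ℕ∞) (lam i) {u | eunorm u < δ}
  smooth_l : ∀ i : Fin n, ContDiffOn ℝ (⊤ : ℕ∞) (l i) {u | eunorm u < δ}
  smooth_r : ∀ i : Fin n, ContDiffOn ℝ (⊤ : ℕ∞) (r i) {u | eunorm u < δ}
  strict_hyp : ∀ u : V n, eunorm u < δ → ∀ i j : Fin n, i < j → lam i u < lam j u
  eig_r : ∀ u : V n, eunorm u < δ → ∀ i, Matrix.mulVec (A u) (r i u) = lam i u • r i u
  eig_l : ∀ u : V n, eunorm u < δ → ∀ i, Matrix.vecMul (l i u) (A u) = lam i u • l i u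
  norm_lr : ∀ u : V n, eunorm u < δ → ∀ i j : Fin n, l i u ⬝ᵥ r j u = if i = j then 1 else 0
  norm_rr : ∀ u : V n, eunorm u < δ → ∀ i : Fin n, r i u ⬝ᵥ r i u = 1

namespace HypSys

variable {n : ℕ} (S : HypSys n)

/-- Normalized coordinates: `r_i(u_i e_i) ≡ e_i` for `|u_i|` small. -/
def Normalized : Prop := ∀ i : Fin n, ∀ s : ℝ, |s| < S.δ → S.r i (s • eb i) = eb i

/-- Matching condition for the inhomogeneous term: `B(u_i e_i) ≡ 0` for `|u_i|` small. -/
def Matching : Prop := ∀ i : Fin n, ∀ s : ℝ, |s| < S.δ → S.B (s • eb i) = 0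

/-- In normalized coordinates, `∂^k λ_i / ∂u_i^k (0)`. -/
def axisDeriv (i : Fin n) (k : ℕ) : ℝ := iteratedDeriv k (fun s : ℝ => S.lam i (s • eb i)) 0

/-- The `i`-th characteristic field is weakly linearly degenerate:
`λ_i(u_i e_i) ≡ λ_i(0)` for `|u_i|` small (in normalized coordinates). -/
def WLD (i : Fin n) : Prop := ∀ s : ℝ, |s| < S.δ → S.lam i (s • eb i) = S.lam i 0

/-- `α_i = a`: the derivatives `∂^k λ_i/∂u_i^k (0)` vanish for `k = 1, …, a`
but not for `k = a + 1`. -/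
def IsAlphaOf (i : Fin n) (a : ℕ) : Prop :=
  (∀ k : ℕ, 1 ≤ k → k ≤ a → S.axisDeriv i k = 0) ∧ S.axisDeriv i (a + 1) ≠ 0

/-- `a = α = min { α_i : i ∈ J } < ∞`, where `J` is the set of non weakly
linearly degenerate indices.  (In particular the system is not weakly
linearly degenerate.) -/
def IsMinAlpha (a : ℕ) : Prop :=
  (∃ i : Fin n, ¬ S.WLD i ∧ S.IsAlphaOf i a) ∧
    ∀ i : Fin n, ¬ S.WLD i → ∀ b : ℕ, S.IsAlphaOf i b → a ≤ b

/-- `b_i(u) = l_i(u) B(u)`. -/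
def bcoef (i : Fin n) (u : V n) : ℝ := S.l i u ⬝ᵥ S.B u

/-- `β_{ijk}(u) = (λ_k(u) − λ_i(u)) l_i(u) ∇r_j(u) r_k(u)`. -/
def beta (i j k : Fin n) (u : V n) : ℝ :=
  (S.lam k u - S.lam i u) * (S.l i u ⬝ᵥ fderiv ℝ (S.r j) u (S.r k u))

/-- `ν_{ijk}(u) = − l_i(u) ∇r_j(u) r_k(u)`. -/
def nu (i j k : Fin n) (u : V n) : ℝ := -(S.l i u ⬝ᵥ fderiv ℝ (S.r j) u (S.r k u))

/-- `γ_{ijk}(u) = (λ_k(u) − λ_j(u)) l_i(u) ∇r_j(u) r_k(u) − ∇λ_j(u) r_k(u) δ_ij`. -/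
def gamma (i j k : Fin n) (u : V n) : ℝ :=
  (S.lam k u - S.lam j u) * (S.l i u ⬝ᵥ fderiv ℝ (S.r j) u (S.r k u)) -
    (if i = j then fderiv ℝ (S.lam j) u (S.r k u) else 0)

/-- `σ_{ijk}(u) = l_i(u) (∇r_k(u) r_j(u) − ∇r_j(u) r_k(u))`. -/
def sigma (i j k : Fin n) (u : V n) : ℝ :=
  S.l i u ⬝ᵥ (fderiv ℝ (S.r k) u (S.r j u) - fderiv ℝ (S.r j) u (S.r k u))

/-- `β̃_{ijk}(u) = β_{ijk}(u) + ∇λ_i(u) r_k(u) δ_ij`. -/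
def betaT (i j k : Fin n) (u : V n) : ℝ :=
  S.beta i j k u + (if i = j then fderiv ℝ (S.lam i) u (S.r k u) else 0)

/-- `γ̃_{ijk}(u) = γ_{ijk}(u) + ½ [∇λ_j(u) r_k(u) δ_ij + ∇λ_k(u) r_j(u) δ_ik]`. -/
def gammaT (i j k : Fin n) (u : V n) : ℝ :=
  S.gamma i j k u + (1 / 2) *
    ((if i = j then fderiv ℝ (S.lam j) u (S.r k u) else 0) +
     (if i = k then fderiv ℝ (S.lam k) u (S.r j u) else 0))

/-- `b̃_{ik}(u) = Σ_l (∂b_i/∂u_l)(u) r_{kl}(u)`. -/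
def btilde (i k : Fin n) (u : V n) : ℝ :=
  ∑ m : Fin n, fderiv ℝ (S.bcoef i) u (Pi.single m 1) * S.r k u m

/-- `u` is a `C¹` solution of the Cauchy problem on `[0,T] × ℝ`, with initial
data `u0`, staying in the neighborhood `{|u| < δ}` of `u = 0`. -/
structure IsSolutionOn (u : ℝ → ℝ → V n) (u0 : ℝ → V n) (T : ℝ) : Prop where
  smooth : ContDiffOn ℝ 1 (fun p : ℝ × ℝ => u p.1 p.2) (Icc 0 T ×ˢ univ)
  small : ∀ t ∈ Icc (0 : ℝ) T, ∀ x : ℝ, eunorm (u t x) < S.δ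
  pde : ∀ t ∈ Icc (0 : ℝ) T, ∀ x : ℝ,
    derivWithin (fun s => u s x) (Icc 0 T) t +
      Matrix.mulVec (S.A (u t x)) (deriv (fun y => u t y) x) = S.B (u t x)
  init : ∀ x : ℝ, u 0 x = u0 x

/-- The lifespan `T̃` of the Cauchy problem with initial data `u0`
(as an extended nonnegative real). -/
def lifespan (u0 : ℝ → V n) : ℝ≥0∞ :=
  ⨆ (T : ℝ) (_ : ∃ u : ℝ → ℝ → V n, S.IsSolutionOn u u0 T), ENNReal.ofReal T

/-- `v_i = l_i(u) u`. -/
def vC (u : ℝ → ℝ → V n) (i : Fin n) (t x : ℝ) : ℝ := S.l i (u t x) ⬝ᵥ u t x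

/-- `w_i = l_i(u) u_x`. -/
def wC (u : ℝ → ℝ → V n) (i : Fin n) (t x : ℝ) : ℝ :=
  S.l i (u t x) ⬝ᵥ deriv (fun y => u t y) x

/-- `v = (v_1, …, v_n)`. -/
def vV (u : ℝ → ℝ → V n) (t x : ℝ) : V n := fun i => S.vC u i t x

/-- `w = (w_1, …, w_n)`. -/
def wV (u : ℝ → ℝ → V n) (t x : ℝ) : V n := fun i => S.wC u i t x

/-- `U_∞(T) = sup_{0≤t≤T} sup_x |u(t,x)|`. -/
def Uinf (_S : HypSys n) (u : ℝ → ℝ → V n) (T : ℝ) : ℝ :=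
  ⨆ p : Icc (0 : ℝ) T × ℝ, eunorm (u p.1.1 p.2)

/-- `V_∞(T) = sup_{0≤t≤T} sup_x |v(t,x)|`. -/
def Vinf (u : ℝ → ℝ → V n) (T : ℝ) : ℝ :=
  ⨆ p : Icc (0 : ℝ) T × ℝ, eunorm (S.vV u p.1.1 p.2)

/-- `W_∞(T) = sup_{0≤t≤T} sup_x |w(t,x)|`. -/
def Winf (u : ℝ → ℝ → V n) (T : ℝ) : ℝ :=
  ⨆ p : Icc (0 : ℝ) T × ℝ, eunorm (S.wV u p.1.1 p.2)

/-- `V_1(T) = sup_{0≤t≤T} ∫_ℝ |v(t,x)| dx`. -/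
def V1 (u : ℝ → ℝ → V n) (T : ℝ) : ℝ :=
  ⨆ t : Icc (0 : ℝ) T, ∫ x : ℝ, eunorm (S.vV u t.1 x)

/-- `W_1(T) = sup_{0≤t≤T} ∫_ℝ |w(t,x)| dx`. -/
def W1 (u : ℝ → ℝ → V n) (T : ℝ) : ℝ :=
  ⨆ t : Icc (0 : ℝ) T, ∫ x : ℝ, eunorm (S.wV u t.1 x)

/-- `ξ` is a `j`-th characteristic curve on `[0,T]`:  `ξ'(t) = λ_j(u(t, ξ(t)))`. -/
def IsChar (u : ℝ → ℝ → V n) (j : Fin n) (T : ℝ) (ξ : ℝ → ℝ) : Prop :=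
  ∀ t ∈ Icc (0 : ℝ) T, HasDerivWithinAt ξ (S.lam j (u t (ξ t))) (Icc 0 T) t

/-- `Ṽ_1(T) = max_{i≠j} sup_{C̃_j} ∫_{C̃_j} |v_i| dt`. -/
def V1t (u : ℝ → ℝ → V n) (T : ℝ) : ℝ :=
  sSup {A : ℝ | ∃ i j : Fin n, i ≠ j ∧ ∃ ξ : ℝ → ℝ, S.IsChar u j T ξ ∧
    A = ∫ t in Icc (0 : ℝ) T, |S.vC u i t (ξ t)|}

/-- `W̃_1(T) = max_{i≠j} sup_{C̃_j} ∫_{C̃_j} |w_i| dt`. -/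
def W1t (u : ℝ → ℝ → V n) (T : ℝ) : ℝ :=
  sSup {A : ℝ | ∃ i j : Fin n, i ≠ j ∧ ∃ ξ : ℝ → ℝ, S.IsChar u j T ξ ∧
    A = ∫ t in Icc (0 : ℝ) T, |S.wC u i t (ξ t)|}

/-- `Q_W(T) = Σ_{j≠k} ∫∫ |w_j||w_k|`. -/
def QW (u : ℝ → ℝ → V n) (T : ℝ) : ℝ :=
  ∑ j : Fin n, ∑ k : Fin n, if j = k then 0 else
    ∫ t in Icc (0 : ℝ) T, ∫ x : ℝ, |S.wC u j t x| * |S.wC u k t x|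

/-- `Q_{VW}(T) = Σ_{j≠k} ∫∫ |v_j||w_k|`. -/
def QVW (u : ℝ → ℝ → V n) (T : ℝ) : ℝ :=
  ∑ j : Fin n, ∑ k : Fin n, if j = k then 0 else
    ∫ t in Icc (0 : ℝ) T, ∫ x : ℝ, |S.vC u j t x| * |S.wC u k t x|

/-- `Q_V(T) = Σ_{j≠k} ∫∫ |v_j||v_k|`. -/
def QV (u : ℝ → ℝ → V n) (T : ℝ) : ℝ :=
  ∑ j : Fin n, ∑ k : Fin n, if j = k then 0 else
    ∫ t in Icc (0 : ℝ) T, ∫ x : ℝ, |S.vC u j t x| * |S.vC u k t x|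

/-- The coefficient `a_0(t;i,y) = γ_{iii}(u)` of the Riccati equation (5.5),
evaluated at `(t,x)`. -/
def ricA0 (u : ℝ → ℝ → V n) (i : Fin n) (t x : ℝ) : ℝ := S.gamma i i i (u t x)

/-- The coefficient `a_1(t;i,y)` of the Riccati equation (5.5), evaluated at `(t,x)`. -/
def ricA1 (u : ℝ → ℝ → V n) (i : Fin n) (t x : ℝ) : ℝ :=
  (∑ j : Fin n, if j = i then 0 else
      (S.gamma i i j (u t x) + S.gamma i j i (u t x)) * S.wC u j t x)
  + (∑ j : Fin n, S.sigma i j i (u t x) * S.bcoef j (u t x))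
  + (S.btilde i i (u t x) - S.btilde i i ((u t x i) • eb i))

/-- The coefficient `a_2(t;i,y)` of the Riccati equation (5.5), evaluated at `(t,x)`. -/
def ricA2 (u : ℝ → ℝ → V n) (i : Fin n) (t x : ℝ) : ℝ :=
  (∑ j : Fin n, ∑ k : Fin n, if j = k ∨ j = i ∨ k = i then 0 else
      S.gamma i j k (u t x) * S.wC u j t x * S.wC u k t x)
  + (∑ j : Fin n, ∑ k : Fin n, if k = i then 0 else
      S.sigma i j k (u t x) * S.bcoef j (u t x) * S.wC u k t x)
  + (∑ k : Fin n, if k = i then 0 else S.btilde i k (u t x) * S.wC u k t x)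

/-- `u` is a `C¹` solution of the system on the open set `Ω`, with values in
the neighborhood `{|u| < δ}`. -/
structure IsSol1On (u : ℝ → ℝ → V n) (Ω : Set (ℝ × ℝ)) : Prop where
  isOpen : IsOpen Ω
  smooth : ContDiffOn ℝ 1 (fun p : ℝ × ℝ => u p.1 p.2) Ω
  small : ∀ p ∈ Ω, eunorm (u p.1 p.2) < S.δ
  pde : ∀ p ∈ Ω, deriv (fun s => u s p.2) p.1 +
    Matrix.mulVec (S.A (u p.1 p.2)) (deriv (fun y => u p.1 y) p.2) = S.B (u p.1 p.2)

/-- `u` is a `C²` solution of the system on the open set `Ω`, with values in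
the neighborhood `{|u| < δ}`. -/
structure IsSol2On (u : ℝ → ℝ → V n) (Ω : Set (ℝ × ℝ)) : Prop where
  isOpen : IsOpen Ω
  smooth : ContDiffOn ℝ 2 (fun p : ℝ × ℝ => u p.1 p.2) Ω
  small : ∀ p ∈ Ω, eunorm (u p.1 p.2) < S.δ
  pde : ∀ p ∈ Ω, deriv (fun s => u s p.2) p.1 +
    Matrix.mulVec (S.A (u p.1 p.2)) (deriv (fun y => u p.1 y) p.2) = S.B (u p.1 p.2)

end HypSys

/-- The family of initial data `u(0,x) = f(ε,x)`: `f` is `C¹` in `(ε,x)`,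
`f(0,x) ≡ 0`, `∂²f/∂ε∂x(·,x)` is uniformly `C^r` (Hölder) on `[0,ε₁]`,
`ψ(x) = ∂f/∂ε(0,x)` is `C¹`, and `M = sup_x |ψ'(x)| < ∞`. -/
structure InitData (n : ℕ) where
  f : ℝ → ℝ → V n
  ε₁ : ℝ
  ε₁_pos : 0 < ε₁
  rexp : ℝ
  rexp_pos : 0 < rexp
  rexp_le_one : rexp ≤ 1
  smooth : ContDiff ℝ 1 (fun p : ℝ × ℝ => f p.1 p.2)
  zero : ∀ x : ℝ, f 0 x = 0
  psi_smooth : ContDiff ℝ 1 (fun x : ℝ => deriv (fun e => f e x) 0)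
  M_bdd : BddAbove (Set.range fun x : ℝ =>
    eunorm (deriv (fun x' : ℝ => deriv (fun e => f e x') 0) x))
  holder : ∃ CH : ℝ, ∀ x ε ε' : ℝ, ε ∈ Set.Icc 0 ε₁ → ε' ∈ Set.Icc 0 ε₁ →
    eunorm (deriv (fun e => deriv (fun y => f e y) x) ε
      - deriv (fun e => deriv (fun y => f e y) x) ε') ≤ CH * |ε - ε'| ^ rexp

namespace InitData

variable {n : ℕ} (D : InitData n)

/-- `ψ(x) = ∂f/∂ε(0,x)`. -/
def psi : ℝ → V n := fun x => deriv (fun e => D.f e x) 0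

/-- `M = sup_x |ψ'(x)|`. -/
def M : ℝ := ⨆ x : ℝ, eunorm (deriv D.psi x)

/-- The smallness conditions (1.17) on the initial data:
`∫|∂f/∂x(ε,·)| ≤ K₁ ε` and `∫|f(ε,·)| ≤ K₂ ε / (M+1)`. -/
def Small (K1 K2 ε : ℝ) : Prop :=
  Integrable (fun x : ℝ => eunorm (deriv (fun y => D.f ε y) x)) ∧
  Integrable (fun x : ℝ => eunorm (D.f ε x)) ∧
  (∫ x : ℝ, eunorm (deriv (fun y => D.f ε y) x)) ≤ K1 * ε ∧
  (∫ x : ℝ, eunorm (D.f ε x)) ≤ K2 / (D.M + 1) * ε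

end InitData

/-- The right-hand side of the sharp lifespan formula (1.26):
`max_{i∈J₁} sup_{x∈ℝ} ( −(1/α!) ∂^{α+1}λ_i/∂u_i^{α+1}(0) ψ_i(x)^α ψ_i'(x) )`. -/
def blowRate {n : ℕ} (S : HypSys n) (D : InitData n) (a : ℕ) : ℝ :=
  ⨆ i : {i : Fin n // ¬ S.WLD i ∧ S.IsAlphaOf i a}, ⨆ x : ℝ,
    (-(1 / (Nat.factorial a : ℝ)) * S.axisDeriv i.1 (a + 1) * (D.psi x) i.1 ^ a *
      deriv (fun x' => (D.psi x') i.1) x)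

/-!
Along the `i`-th characteristic direction `h = u_t + λ_i u_x` the system reads
`l_k(u) h = b_k + (λ_i - λ_k) w_k`, and differentiating `l_i r_j = δ_ij` turns `∇l_i` into the
coefficients `l_i ∇r_j r_k`; the product rule for `v_i = l_i(u) u` then gives the first identity.

For the second, `w_i` and `l_i(u) u_t = b_i - λ_i w_i` are the two components of the pullback of
the 1-form `l_i` by `u`. Since mixed partials commute, `∂_t w_i - ∂_x (b_i - λ_i w_i)` is the
pullback of the exterior derivative of `l_i`, whose value on `(r_j, r_k)` is `-l_i [r_j, r_k]`. This
produces `σ_ijk`, and `γ̃_ijk` has the same symmetrization in `(j, k)` as `-λ_k σ_ijk`.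
-/

section DotProduct

variable {ι : Type*} [Fintype ι] {E : Type*} [NormedAddCommGroup E] [NormedSpace ℝ E]

theorem differentiableAt_dotProduct {f g : E → ι → ℝ} {x : E} (hf : DifferentiableAt ℝ f x)
    (hg : DifferentiableAt ℝ g x) : DifferentiableAt ℝ (fun y => f y ⬝ᵥ g y) x := by
  simp only [dotProduct]
  fun_prop

theorem hasDerivAt_dotProduct {f g : ℝ → ι → ℝ} {f' g' : ι → ℝ} {x : ℝ}
    (hf : HasDerivAt f f' x) (hg : HasDerivAt g g' x) :
    HasDerivAt (fun y => f y ⬝ᵥ g y) (f x ⬝ᵥ g' + f' ⬝ᵥ g x) x :=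
  (dotProductBilin (m := ι) (A := ℝ) ℝ ℝ).toContinuousBilinearMap.hasDerivAt_of_bilinear
    (fun _ => hf) fun _ => hg

theorem fderiv_dotProduct_eq_neg_of_eventuallyEq_const {f g : E → ι → ℝ} {x : E} {c : ℝ}
    (hf : DifferentiableAt ℝ f x) (hg : DifferentiableAt ℝ g x)
    (hfg : (fun y => f y ⬝ᵥ g y) =ᶠ[𝓝 x] fun _ => c) (h : E) :
    fderiv ℝ f x h ⬝ᵥ g x = -(f x ⬝ᵥ fderiv ℝ g x h) := by
  have hprod := (dotProductBilin ℝ ℝ).toContinuousBilinearMap.fderiv_of_bilinear hf hg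
  have hconst : fderiv ℝ (fun y => f y ⬝ᵥ g y) x = 0 :=
    hfg.fderiv_eq.trans (fderiv_const_apply c)
  exact eq_neg_of_add_eq_zero_right (DFunLike.congr_fun (hprod.symm.trans hconst) h)

theorem sum_dotProduct_smul_of_biorthogonal [DecidableEq ι] {l r : ι → ι → ℝ}
    (hlr : ∀ i j, l i ⬝ᵥ r j = if i = j then 1 else 0) (x : ι → ℝ) :
    ∑ j, (l j ⬝ᵥ x) • r j = x := by
  have hmul : of l * (of r)ᵀ = 1 := by
    ext i j
    rw [one_apply, ← hlr]
    rfl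
  calc ∑ j, (l j ⬝ᵥ x) • r j = (of l *ᵥ x) ᵥ* of r := (vecMul_eq_sum _ _).symm
    _ = ((of r)ᵀ * of l) *ᵥ x := by rw [← mulVec_transpose, mulVec_mulVec]
    _ = x := by rw [mul_eq_one_comm.1 hmul, one_mulVec]

theorem sum_sum_mul_mul_congr_of_add_swap {c d : ι → ι → ℝ}
    (hcd : ∀ j k, c j k + c k j = d j k + d k j) (w : ι → ℝ) :
    ∑ j, ∑ k, c j k * w j * w k = ∑ j, ∑ k, d j k * w j * w k := by
  have symm_sum (a : ι → ι → ℝ) : 2 * ∑ j, ∑ k, a j k * w j * w k =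
      ∑ j, ∑ k, (a j k + a k j) * w j * w k := by
    rw [two_mul]
    nth_rewrite 2 [Finset.sum_comm]
    simp only [← Finset.sum_add_distrib]
    exact Finset.sum_congr rfl fun j _ => Finset.sum_congr rfl fun k _ => by ring
  have htwo := symm_sum c
  simp only [hcd] at htwo
  linarith [symm_sum d]

end DotProduct

section PartialDerivatives

variable {E : Type*} [NormedAddCommGroup E] [NormedSpace ℝ E] {u : ℝ → ℝ → E} {t x : ℝ}

theorem hasDerivAt_partial_fst (hu : DifferentiableAt ℝ (fun q : ℝ × ℝ => u q.1 q.2) (t, x)) :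
    HasDerivAt (fun s => u s x) (fderiv ℝ (fun q : ℝ × ℝ => u q.1 q.2) (t, x) (1, 0)) t :=
  hu.hasFDerivAt.comp_hasDerivAt (f := fun s => (s, x)) t
    ((hasDerivAt_id t).prodMk (hasDerivAt_const t x))

theorem hasDerivAt_partial_snd (hu : DifferentiableAt ℝ (fun q : ℝ × ℝ => u q.1 q.2) (t, x)) :
    HasDerivAt (u t) (fderiv ℝ (fun q : ℝ × ℝ => u q.1 q.2) (t, x) (0, 1)) x :=
  hu.hasFDerivAt.comp_hasDerivAt (f := fun y => (t, y)) x
    ((hasDerivAt_const x t).prodMk (hasDerivAt_id x))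

theorem eventually_mk_left_mem {Ω : Set (ℝ × ℝ)} (hΩ : Ω ∈ 𝓝 (t, x)) :
    ∀ᶠ s in 𝓝 t, (s, x) ∈ Ω :=
  (Continuous.prodMk_left x).continuousAt.preimage_mem_nhds hΩ

theorem eventually_mk_right_mem {Ω : Set (ℝ × ℝ)} (hΩ : Ω ∈ 𝓝 (t, x)) :
    ∀ᶠ y in 𝓝 x, (t, y) ∈ Ω :=
  (Continuous.prodMk_right t).continuousAt.preimage_mem_nhds hΩ

theorem differentiableAt_fderiv_of_contDiffAt_two {F : Type*} [NormedAddCommGroup F]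
    [NormedSpace ℝ F] {f : F → E} {p : F} (hf : ContDiffAt ℝ 2 f p) :
    DifferentiableAt ℝ (fderiv ℝ f) p :=
  (hf.fderiv_right (m := 1) (by norm_num)).differentiableAt one_ne_zero

theorem exists_hasDerivAt_mixed_partials
    (hu : ContDiffAt ℝ 2 (fun q : ℝ × ℝ => u q.1 q.2) (t, x)) :
    ∃ m : E, HasDerivAt (fun s => deriv (u s) x) m t ∧
      HasDerivAt (fun y => deriv (fun s => u s y) t) m x := by
  set U : ℝ × ℝ → E := fun q => u q.1 q.2
  have hU : ∀ᶠ q in 𝓝 (t, x), DifferentiableAt ℝ U q :=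
    (hu.eventually (by simp)).mono fun q hq => hq.differentiableAt two_ne_zero
  have hdir (e : ℝ × ℝ) : HasFDerivAt (fun q : ℝ × ℝ => fderiv ℝ U (q.1, q.2) e)
      ((fderiv ℝ (fderiv ℝ U) (t, x)).flip e) (t, x) := by
    simpa using (differentiableAt_fderiv_of_contDiffAt_two hu).hasFDerivAt.clm_apply
      (hasFDerivAt_const e (t, x))
  refine ⟨fderiv ℝ (fderiv ℝ U) (t, x) (1, 0) (0, 1), ?_, ?_⟩
  · have hfst := hasDerivAt_partial_fst (u := fun s y => fderiv ℝ U (s, y) (0, 1))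
      (hdir (0, 1)).differentiableAt
    rw [(hdir (0, 1)).fderiv] at hfst
    exact hfst.congr_of_eventuallyEq
      ((eventually_mk_left_mem hU).mono fun s hs => (hasDerivAt_partial_snd hs).deriv)
  · have hsnd := hasDerivAt_partial_snd (u := fun s y => fderiv ℝ U (s, y) (1, 0))
      (hdir (1, 0)).differentiableAt
    rw [(hdir (1, 0)).fderiv, ContinuousLinearMap.flip_apply,
      hu.isSymmSndFDerivAt (by simp) (0, 1) (1, 0)] at hsnd
    exact hsnd.congr_of_eventuallyEq
      ((eventually_mk_right_mem hU).mono fun y hy => (hasDerivAt_partial_fst hy).deriv)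

end PartialDerivatives

/-- A first-order quasilinear system `u_t + A(u) u_x = B(u)` in one space dimension whose matrix
`A(u)` has, on an open set of states, a complete system of differentiable left eigenvectors `l` and
dual right eigenvectors `r`. Eigenvalues may coincide, so this is weaker than strict hyperbolicity,
and only `l_i(u) r_j(u) = δ_ij` is imposed as a normalization. -/
structure DiagonalizableSystem (ι : Type*) [Fintype ι] [DecidableEq ι] where
  A : (ι → ℝ) → Matrix ι ι ℝ
  B : (ι → ℝ) → ι → ℝ
  lam : ι → (ι → ℝ) → ℝ
  l : ι → (ι → ℝ) → ι → ℝ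
  r : ι → (ι → ℝ) → ι → ℝ
  domain : Set (ι → ℝ)
  isOpen_domain : IsOpen domain
  differentiableOn_B : DifferentiableOn ℝ B domain
  differentiableOn_lam : ∀ i, DifferentiableOn ℝ (lam i) domain
  differentiableOn_l : ∀ i, DifferentiableOn ℝ (l i) domain
  differentiableOn_r : ∀ i, DifferentiableOn ℝ (r i) domain
  l_vecMul_A : ∀ a ∈ domain, ∀ i, l i a ᵥ* A a = lam i a • l i a
  l_dotProduct_r : ∀ a ∈ domain, ∀ i j, l i a ⬝ᵥ r j a = if i = j then 1 else 0

namespace DiagonalizableSystem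

variable {ι : Type*} [Fintype ι] [DecidableEq ι] (S : DiagonalizableSystem ι)

/-- The component `b_i(u) = l_i(u) B(u)` of the source term. -/
def source (i : ι) (a : ι → ℝ) : ℝ := S.l i a ⬝ᵥ S.B a

/-- The coefficient `l_i(u) ∇r_j(u) r_k(u)` of the flat connection in the frame `r`, from which the
interaction coefficients of the system are built. -/
def connection (i j k : ι) (a : ι → ℝ) : ℝ := S.l i a ⬝ᵥ fderiv ℝ (S.r j) a (S.r k a)

/-- The coefficient `β_ijk` of `v_j w_k` in the equation for `v_i` along its characteristic. -/
def beta (i j k : ι) (a : ι → ℝ) : ℝ := (S.lam k a - S.lam i a) * S.connection i j k a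

/-- The coefficient `ν_ijk` of `v_j b_k` in the equation for `v_i`. -/
def nu (i j k : ι) (a : ι → ℝ) : ℝ := -S.connection i j k a

/-- The coefficient `γ_ijk` of `w_j w_k` in the equation for `w_i` along its characteristic. -/
def gamma (i j k : ι) (a : ι → ℝ) : ℝ :=
  (S.lam k a - S.lam j a) * S.connection i j k a -
    if i = j then fderiv ℝ (S.lam j) a (S.r k a) else 0

/-- The coefficient `σ_ijk` of `w_j b_k` in the equation for `w_i`: the `i`-th component of the Lie
bracket `[r_j, r_k]`. -/
def sigma (i j k : ι) (a : ι → ℝ) : ℝ :=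
  S.l i a ⬝ᵥ VectorField.lieBracket ℝ (S.r j) (S.r k) a

/-- The coefficient `β̃_ijk` of `v_j w_k` in the divergence form of the equation for `v_i`. -/
def betaTilde (i j k : ι) (a : ι → ℝ) : ℝ :=
  S.beta i j k a + if i = j then fderiv ℝ (S.lam i) a (S.r k a) else 0

/-- The coefficient `γ̃_ijk` of `w_j w_k` in the divergence form of the equation for `w_i`. -/
def gammaTilde (i j k : ι) (a : ι → ℝ) : ℝ :=
  S.gamma i j k a + (1 / 2) *
    ((if i = j then fderiv ℝ (S.lam j) a (S.r k a) else 0) +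
      if i = k then fderiv ℝ (S.lam k) a (S.r j a) else 0)

/-- The component `v_i = l_i(u) u` of a state-valued function `u` of `(t, x)`. -/
def vCoord (u : ℝ → ℝ → ι → ℝ) (i : ι) (t x : ℝ) : ℝ := S.l i (u t x) ⬝ᵥ u t x

/-- The component `w_i = l_i(u) u_x` of the space derivative of `u`. -/
def wCoord (u : ℝ → ℝ → ι → ℝ) (i : ι) (t x : ℝ) : ℝ := S.l i (u t x) ⬝ᵥ deriv (u t) x

/-- `u` is a `C^m` solution of the system on the open set `Ω` of points `(t, x)`. The derivatives in
the equation are the true ones only for `m ≠ 0`. -/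
structure IsSolutionOn (m : WithTop ℕ∞) (u : ℝ → ℝ → ι → ℝ) (Ω : Set (ℝ × ℝ)) : Prop where
  isOpen : IsOpen Ω
  contDiffOn : ContDiffOn ℝ m (fun q : ℝ × ℝ => u q.1 q.2) Ω
  mapsTo : ∀ p ∈ Ω, u p.1 p.2 ∈ S.domain
  pde : ∀ p ∈ Ω, deriv (fun s => u s p.2) p.1 + S.A (u p.1 p.2) *ᵥ deriv (u p.1) p.2 =
    S.B (u p.1 p.2)

section Frame

variable {S} {F : Type*} [NormedAddCommGroup F] [NormedSpace ℝ F] {a : ι → ℝ}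

theorem differentiableAt_of_mem_domain {f : (ι → ℝ) → F} (hf : DifferentiableOn ℝ f S.domain)
    (ha : a ∈ S.domain) : DifferentiableAt ℝ f a :=
  hf.differentiableAt (S.isOpen_domain.mem_nhds ha)

theorem differentiableAt_source (ha : a ∈ S.domain) (i : ι) :
    DifferentiableAt ℝ (S.source i) a :=
  differentiableAt_dotProduct (differentiableAt_of_mem_domain (S.differentiableOn_l i) ha)
    (differentiableAt_of_mem_domain S.differentiableOn_B ha)

theorem map_eq_sum_l_dotProduct_smul (ha : a ∈ S.domain) (D : (ι → ℝ) →L[ℝ] F) (h : ι → ℝ) :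
    D h = ∑ k, (S.l k a ⬝ᵥ h) • D (S.r k a) := by
  conv_lhs => rw [← sum_dotProduct_smul_of_biorthogonal (S.l_dotProduct_r a ha) h]
  simp only [map_sum, map_smul]

theorem fderiv_l_dotProduct_r (ha : a ∈ S.domain) (i j : ι) (h : ι → ℝ) :
    fderiv ℝ (S.l i) a h ⬝ᵥ S.r j a = -∑ k, S.connection i j k a * (S.l k a ⬝ᵥ h) := by
  rw [fderiv_dotProduct_eq_neg_of_eventuallyEq_const
      (differentiableAt_of_mem_domain (S.differentiableOn_l i) ha)
      (differentiableAt_of_mem_domain (S.differentiableOn_r j) ha)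
      (eventually_of_mem (S.isOpen_domain.mem_nhds ha) fun b hb => S.l_dotProduct_r b hb i j),
    map_eq_sum_l_dotProduct_smul ha (fderiv ℝ (S.r j) a) h, dotProduct_sum]
  simp only [dotProduct_smul, smul_eq_mul, connection, mul_comm]

theorem fderiv_l_dotProduct (ha : a ∈ S.domain) (i : ι) (h b : ι → ℝ) :
    fderiv ℝ (S.l i) a h ⬝ᵥ b =
      ∑ j, ∑ k, S.nu i j k a * (S.l j a ⬝ᵥ b) * (S.l k a ⬝ᵥ h) := by
  conv_lhs => rw [← sum_dotProduct_smul_of_biorthogonal (S.l_dotProduct_r a ha) b]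
  simp only [dotProduct_sum, dotProduct_smul, smul_eq_mul, fderiv_l_dotProduct_r ha, nu,
    ← Finset.sum_neg_distrib, Finset.mul_sum]
  exact Finset.sum_congr rfl fun j _ => Finset.sum_congr rfl fun k _ => by ring

theorem sigma_eq_nu_sub_nu (i j k : ι) : S.sigma i j k a = S.nu i j k a - S.nu i k j a := by
  simp only [sigma, nu, connection, VectorField.lieBracket, dotProduct_sub]
  ring

-- The structure equation: the left side is the exterior derivative of the 1-form `l i` at `(h, b)`.
theorem fderiv_l_dotProduct_sub_swap (ha : a ∈ S.domain) (i : ι) (h b : ι → ℝ) :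
    fderiv ℝ (S.l i) a h ⬝ᵥ b - fderiv ℝ (S.l i) a b ⬝ᵥ h =
      ∑ j, ∑ k, S.sigma i j k a * (S.l j a ⬝ᵥ b) * (S.l k a ⬝ᵥ h) := by
  rw [fderiv_l_dotProduct ha, fderiv_l_dotProduct ha,
    Finset.sum_comm (f := fun j k => S.nu i j k a * (S.l j a ⬝ᵥ h) * (S.l k a ⬝ᵥ b))]
  simp only [← Finset.sum_sub_distrib, sigma_eq_nu_sub_nu]
  exact Finset.sum_congr rfl fun j _ => Finset.sum_congr rfl fun k _ => by ring

theorem hasDerivAt_l_dotProduct (i : ι) {c g : ℝ → ι → ℝ} {c' g' : ι → ℝ} {s : ℝ}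
    (hcs : c s ∈ S.domain) (hc : HasDerivAt c c' s) (hg : HasDerivAt g g' s) :
    HasDerivAt (fun s => S.l i (c s) ⬝ᵥ g s)
      (S.l i (c s) ⬝ᵥ g' + fderiv ℝ (S.l i) (c s) c' ⬝ᵥ g s) s :=
  hasDerivAt_dotProduct ((differentiableAt_of_mem_domain
    (S.differentiableOn_l i) hcs).hasFDerivAt.comp_hasDerivAt s hc) hg

end Frame

section Coefficients

variable (i : ι) (a v w b : ι → ℝ)

theorem sum_betaTilde_mul_mul :
    ∑ j, ∑ k, S.betaTilde i j k a * v j * w k =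
      ∑ j, ∑ k, S.beta i j k a * v j * w k +
        (∑ k, fderiv ℝ (S.lam i) a (S.r k a) * w k) * v i := by
  have hdiag (j k : ι) : S.betaTilde i j k a * v j * w k = S.beta i j k a * v j * w k +
      if i = j then fderiv ℝ (S.lam i) a (S.r k a) * w k * v j else 0 := by
    rw [betaTilde]
    split_ifs <;> ring
  simp only [hdiag, Finset.sum_add_distrib, Finset.sum_mul]
  rw [Finset.sum_comm (f := fun j k => if i = j then _ else _)]
  simp only [Finset.sum_ite_eq, Finset.mem_univ, if_true]

theorem sum_nu_mul_mul_source_add :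
    ∑ j, ∑ k, S.nu i j k a * v j * (b k + (S.lam i a - S.lam k a) * w k) =
      ∑ j, ∑ k, S.beta i j k a * v j * w k + ∑ j, ∑ k, S.nu i j k a * v j * b k := by
  simp only [← Finset.sum_add_distrib, beta, nu]
  exact Finset.sum_congr rfl fun j _ => Finset.sum_congr rfl fun k _ => by ring

theorem gammaTilde_add_swap (j k : ι) : S.gammaTilde i j k a + S.gammaTilde i k j a =
    -(S.sigma i j k a * S.lam k a) + -(S.sigma i k j a * S.lam j a) := by
  simp only [gammaTilde, gamma, sigma_eq_nu_sub_nu, nu]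
  ring

theorem sum_sigma_mul_mul_source_sub :
    ∑ j, ∑ k, S.sigma i j k a * w j * (b k - S.lam k a * w k) =
      ∑ j, ∑ k, S.gammaTilde i j k a * w j * w k + ∑ j, ∑ k, S.sigma i j k a * w j * b k := by
  rw [sum_sum_mul_mul_congr_of_add_swap (S.gammaTilde_add_swap i a)]
  simp only [← Finset.sum_add_distrib]
  exact Finset.sum_congr rfl fun j _ => Finset.sum_congr rfl fun k _ => by ring

end Coefficients

namespace IsSolutionOn

variable {S} {u : ℝ → ℝ → ι → ℝ} {Ω : Set (ℝ × ℝ)} {t x : ℝ}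

theorem contDiffAt {m : WithTop ℕ∞} (hu : S.IsSolutionOn m u Ω) (hp : (t, x) ∈ Ω) :
    ContDiffAt ℝ m (fun q : ℝ × ℝ => u q.1 q.2) (t, x) :=
  hu.contDiffOn.contDiffAt (hu.isOpen.mem_nhds hp)

theorem of_le {m m' : WithTop ℕ∞} (hu : S.IsSolutionOn m u Ω) (hm : m' ≤ m) :
    S.IsSolutionOn m' u Ω :=
  { hu with contDiffOn := hu.contDiffOn.of_le hm }

theorem hasDerivAt_time (hu : S.IsSolutionOn 1 u Ω) (hp : (t, x) ∈ Ω) :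
    HasDerivAt (fun s => u s x) (deriv (fun s => u s x) t) t :=
  (hasDerivAt_partial_fst
    ((hu.contDiffAt hp).differentiableAt one_ne_zero)).differentiableAt.hasDerivAt

theorem hasDerivAt_space (hu : S.IsSolutionOn 1 u Ω) (hp : (t, x) ∈ Ω) :
    HasDerivAt (u t) (deriv (u t) x) x :=
  (hasDerivAt_partial_snd
    ((hu.contDiffAt hp).differentiableAt one_ne_zero)).differentiableAt.hasDerivAt

theorem l_dotProduct_deriv_time {m : WithTop ℕ∞} (hu : S.IsSolutionOn m u Ω) (hp : (t, x) ∈ Ω)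
    (k : ι) : S.l k (u t x) ⬝ᵥ deriv (fun s => u s x) t =
      S.source k (u t x) - S.lam k (u t x) * S.wCoord u k t x := by
  rw [eq_sub_of_add_eq (hu.pde _ hp), dotProduct_sub, dotProduct_mulVec,
    S.l_vecMul_A _ (hu.mapsTo _ hp), smul_dotProduct]
  rfl

theorem hasDerivAt_lam_comp (hu : S.IsSolutionOn 1 u Ω) (hp : (t, x) ∈ Ω) (i : ι) :
    HasDerivAt (fun y => S.lam i (u t y))
      (∑ k, fderiv ℝ (S.lam i) (u t x) (S.r k (u t x)) * S.wCoord u k t x) x := by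
  have ha := hu.mapsTo _ hp
  have hlam := (differentiableAt_of_mem_domain
    (S.differentiableOn_lam i) ha).hasFDerivAt.comp_hasDerivAt x (hu.hasDerivAt_space hp)
  rw [map_eq_sum_l_dotProduct_smul ha] at hlam
  exact hlam.congr_deriv (Finset.sum_congr rfl fun k _ => mul_comm _ _)

theorem hasDerivAt_vCoord_time (hu : S.IsSolutionOn 1 u Ω) (hp : (t, x) ∈ Ω) (i : ι) :
    HasDerivAt (fun s => S.vCoord u i s x) (S.l i (u t x) ⬝ᵥ deriv (fun s => u s x) t +
      fderiv ℝ (S.l i) (u t x) (deriv (fun s => u s x) t) ⬝ᵥ u t x) t :=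
  hasDerivAt_l_dotProduct i (hu.mapsTo _ hp) (hu.hasDerivAt_time hp) (hu.hasDerivAt_time hp)

theorem hasDerivAt_vCoord_space (hu : S.IsSolutionOn 1 u Ω) (hp : (t, x) ∈ Ω) (i : ι) :
    HasDerivAt (fun y => S.vCoord u i t y)
      (S.wCoord u i t x + fderiv ℝ (S.l i) (u t x) (deriv (u t) x) ⬝ᵥ u t x) x :=
  hasDerivAt_l_dotProduct i (hu.mapsTo _ hp) (hu.hasDerivAt_space hp) (hu.hasDerivAt_space hp)

theorem l_dotProduct_characteristic_deriv {m : WithTop ℕ∞} (hu : S.IsSolutionOn m u Ω)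
    (hp : (t, x) ∈ Ω) (i k : ι) :
    S.l k (u t x) ⬝ᵥ (deriv (fun s => u s x) t + S.lam i (u t x) • deriv (u t) x) =
      S.source k (u t x) + (S.lam i (u t x) - S.lam k (u t x)) * S.wCoord u k t x := by
  rw [dotProduct_add, hu.l_dotProduct_deriv_time hp, dotProduct_smul, smul_eq_mul, wCoord]
  ring

theorem deriv_vCoord_characteristic (hu : S.IsSolutionOn 1 u Ω) (hp : (t, x) ∈ Ω) (i : ι) :
    deriv (fun s => S.vCoord u i s x) t +
        S.lam i (u t x) * deriv (fun y => S.vCoord u i t y) x =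
      ∑ j, ∑ k, S.beta i j k (u t x) * S.vCoord u j t x * S.wCoord u k t x +
        ∑ j, ∑ k, S.nu i j k (u t x) * S.vCoord u j t x * S.source k (u t x) +
        S.source i (u t x) := by
  set h := deriv (fun s => u s x) t + S.lam i (u t x) • deriv (u t) x with hh
  calc _ = S.l i (u t x) ⬝ᵥ h + fderiv ℝ (S.l i) (u t x) h ⬝ᵥ u t x := by
        rw [(hu.hasDerivAt_vCoord_time hp i).deriv, (hu.hasDerivAt_vCoord_space hp i).deriv, hh,
          map_add, map_smul, dotProduct_add, add_dotProduct, dotProduct_smul, smul_dotProduct,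
          smul_eq_mul, smul_eq_mul, wCoord]
        ring
    _ = S.source i (u t x) + ∑ j, ∑ k, S.nu i j k (u t x) * S.vCoord u j t x *
          (S.source k (u t x) + (S.lam i (u t x) - S.lam k (u t x)) * S.wCoord u k t x) := by
        simp only [fderiv_l_dotProduct (hu.mapsTo _ hp), hh,
          hu.l_dotProduct_characteristic_deriv hp, sub_self, zero_mul, add_zero, vCoord]
    _ = _ := by rw [sum_nu_mul_mul_source_add, add_comm]

theorem deriv_vCoord_divergence (hu : S.IsSolutionOn 1 u Ω) (hp : (t, x) ∈ Ω) (i : ι) :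
    deriv (fun s => S.vCoord u i s x) t +
        deriv (fun y => S.lam i (u t y) * S.vCoord u i t y) x =
      ∑ j, ∑ k, S.betaTilde i j k (u t x) * S.vCoord u j t x * S.wCoord u k t x +
        ∑ j, ∑ k, S.nu i j k (u t x) * S.vCoord u j t x * S.source k (u t x) +
        S.source i (u t x) := by
  have hspace := (hu.hasDerivAt_vCoord_space hp i).differentiableAt.hasDerivAt
  rw [((hu.hasDerivAt_lam_comp hp i).fun_mul hspace).deriv, sum_betaTilde_mul_mul]
  linarith [hu.deriv_vCoord_characteristic hp i]

theorem differentiableAt_l_dotProduct_deriv_time (hu : S.IsSolutionOn 2 u Ω) (hp : (t, x) ∈ Ω)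
    (i : ι) : DifferentiableAt ℝ (fun y => S.l i (u t y) ⬝ᵥ deriv (fun s => u s y) t) x :=
  have ⟨_, _, hmx⟩ := exists_hasDerivAt_mixed_partials (hu.contDiffAt hp)
  (hasDerivAt_l_dotProduct i (hu.mapsTo _ hp)
    ((hu.of_le one_le_two).hasDerivAt_space hp) hmx).differentiableAt

-- The terms `l_i(u) u_tx` of the two derivatives cancel.
theorem deriv_wCoord_time_sub_deriv_space (hu : S.IsSolutionOn 2 u Ω) (hp : (t, x) ∈ Ω) (i : ι) :
    deriv (fun s => S.wCoord u i s x) t -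
        deriv (fun y => S.l i (u t y) ⬝ᵥ deriv (fun s => u s y) t) x =
      ∑ j, ∑ k, S.sigma i j k (u t x) * S.wCoord u j t x *
        (S.source k (u t x) - S.lam k (u t x) * S.wCoord u k t x) := by
  have ha := hu.mapsTo _ hp
  have hu1 : S.IsSolutionOn 1 u Ω := hu.of_le one_le_two
  obtain ⟨m, hmt, hmx⟩ := exists_hasDerivAt_mixed_partials (hu.contDiffAt hp)
  have htime : HasDerivAt (fun s => S.wCoord u i s x) _ t :=
    hasDerivAt_l_dotProduct i ha (hu1.hasDerivAt_time hp) hmt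
  have hspace := hasDerivAt_l_dotProduct i ha (hu1.hasDerivAt_space hp) hmx
  rw [htime.deriv, hspace.deriv, add_sub_add_left_eq_sub, fderiv_l_dotProduct_sub_swap ha]
  simp only [hu.l_dotProduct_deriv_time hp, wCoord]

theorem deriv_wCoord_divergence (hu : S.IsSolutionOn 2 u Ω) (hp : (t, x) ∈ Ω) (i : ι) :
    deriv (fun s => S.wCoord u i s x) t +
        deriv (fun y => S.lam i (u t y) * S.wCoord u i t y) x =
      ∑ j, ∑ k, S.gammaTilde i j k (u t x) * S.wCoord u j t x * S.wCoord u k t x +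
        ∑ j, ∑ k, S.sigma i j k (u t x) * S.wCoord u j t x * S.source k (u t x) +
        deriv (fun y => S.source i (u t y)) x := by
  have hsource : DifferentiableAt ℝ (fun y => S.source i (u t y)) x :=
    (differentiableAt_source (hu.mapsTo _ hp) i).comp x
      ((hu.of_le one_le_two).hasDerivAt_space hp).differentiableAt
  have hflux : (fun y => S.lam i (u t y) * S.wCoord u i t y) =ᶠ[𝓝 x]
      fun y => S.source i (u t y) - S.l i (u t y) ⬝ᵥ deriv (fun s => u s y) t := by
    filter_upwards [eventually_mk_right_mem (hu.isOpen.mem_nhds hp)] with y hy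
    rw [hu.l_dotProduct_deriv_time hy, sub_sub_cancel]
  rw [hflux.deriv_eq,
    deriv_fun_sub hsource (hu.differentiableAt_l_dotProduct_deriv_time hp i),
    ← sum_sigma_mul_mul_source_sub, ← hu.deriv_wCoord_time_sub_deriv_space hp]
  ring

end IsSolutionOn

end DiagonalizableSystem

theorem isOpen_setOf_eunorm_lt {n : ℕ} (d : ℝ) : IsOpen {a : V n | eunorm a < d} := by
  unfold eunorm
  exact isOpen_lt (by fun_prop) continuous_const

/-- A strictly hyperbolic system as a diagonalizable system on the ball `|u| < δ`. -/
def HypSys.toDiagonalizableSystem {n : ℕ} (S : HypSys n) : DiagonalizableSystem (Fin n) where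
  A := S.A
  B := S.B
  lam := S.lam
  l := S.l
  r := S.r
  domain := {a | eunorm a < S.δ}
  isOpen_domain := isOpen_setOf_eunorm_lt S.δ
  differentiableOn_B := S.smooth_B.differentiableOn (by simp)
  differentiableOn_lam i := (S.smooth_lam i).differentiableOn (by simp)
  differentiableOn_l i := (S.smooth_l i).differentiableOn (by simp)
  differentiableOn_r i := (S.smooth_r i).differentiableOn (by simp)
  l_vecMul_A := S.eig_l
  l_dotProduct_r := S.norm_lr

theorem stmt13_general {ι : Type*} [Fintype ι] [DecidableEq ι] (S : DiagonalizableSystem ι)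
    (u : ℝ → ℝ → ι → ℝ) (Ω : Set (ℝ × ℝ)) (hu : S.IsSolutionOn 2 u Ω) (i : ι) (p : ℝ × ℝ)
    (hp : p ∈ Ω) :
    (deriv (fun s => S.vCoord u i s p.2) p.1 +
        deriv (fun y => S.lam i (u p.1 y) * S.vCoord u i p.1 y) p.2 =
      ∑ j, ∑ k, S.betaTilde i j k (u p.1 p.2) * S.vCoord u j p.1 p.2 * S.wCoord u k p.1 p.2 +
        ∑ j, ∑ k, S.nu i j k (u p.1 p.2) * S.vCoord u j p.1 p.2 * S.source k (u p.1 p.2) +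
        S.source i (u p.1 p.2)) ∧
    (deriv (fun s => S.wCoord u i s p.2) p.1 +
        deriv (fun y => S.lam i (u p.1 y) * S.wCoord u i p.1 y) p.2 =
      ∑ j, ∑ k, S.gammaTilde i j k (u p.1 p.2) * S.wCoord u j p.1 p.2 * S.wCoord u k p.1 p.2 +
        ∑ j, ∑ k, S.sigma i j k (u p.1 p.2) * S.wCoord u j p.1 p.2 * S.source k (u p.1 p.2) +
        deriv (fun y => S.source i (u p.1 y)) p.2) :=
  ⟨(hu.of_le one_le_two).deriv_vCoord_divergence hp i, hu.deriv_wCoord_divergence hp i⟩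

/-- **The divergence-form decompositions (2.12) and (2.14)**.  For a `C²`
solution `u` of the strictly hyperbolic system staying in the neighborhood of
`u = 0`, with `v_i = l_i(u)u`, `w_i = l_i(u)u_x`, `b_i(u) = l_i(u)B(u)`:
`∂v_i/∂t + ∂(λ_i(u)v_i)/∂x = Σ_{jk} β̃_{ijk}(u) v_j w_k + Σ_{jk} ν_{ijk}(u) v_j b_k(u) + b_i(u)` and
`∂w_i/∂t + ∂(λ_i(u)w_i)/∂x = Σ_{jk} γ̃_{ijk}(u) w_j w_k + Σ_{jk} σ_{ijk}(u) w_j b_k(u) + (b_i(u))_x`. -/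
theorem stmt13 {n : ℕ} (S : HypSys n) (u : ℝ → ℝ → V n) (Ω : Set (ℝ × ℝ))
    (hu : S.IsSol2On u Ω) :
    ∀ i : Fin n, ∀ p ∈ Ω,
      (deriv (fun s => S.vC u i s p.2) p.1 +
          deriv (fun y => S.lam i (u p.1 y) * S.vC u i p.1 y) p.2 =
        (∑ j : Fin n, ∑ k : Fin n,
            S.betaT i j k (u p.1 p.2) * S.vC u j p.1 p.2 * S.wC u k p.1 p.2) +
          (∑ j : Fin n, ∑ k : Fin n,
            S.nu i j k (u p.1 p.2) * S.vC u j p.1 p.2 * S.bcoef k (u p.1 p.2)) +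
          S.bcoef i (u p.1 p.2)) ∧
      (deriv (fun s => S.wC u i s p.2) p.1 +
          deriv (fun y => S.lam i (u p.1 y) * S.wC u i p.1 y) p.2 =
        (∑ j : Fin n, ∑ k : Fin n,
            S.gammaT i j k (u p.1 p.2) * S.wC u j p.1 p.2 * S.wC u k p.1 p.2) +
          (∑ j : Fin n, ∑ k : Fin n,
            S.sigma i j k (u p.1 p.2) * S.wC u j p.1 p.2 * S.bcoef k (u p.1 p.2)) +
          deriv (fun y => S.bcoef i (u p.1 y)) p.2) := by
  exact stmt13_general S.toDiagonalizableSystem u Ω ⟨hu.isOpen, hu.smooth, hu.small, hu.pde⟩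
end
end

section
/- Suppose the coordinates u are normalized and the inhomogeneous term B(u) satisfies the matching condition. Then for each i = 1,…,n and all |u| small, the function b_i(u) = l_i(u)B(u) admits a representation b_i(u) = Σ_{j≠k} b_{ijk}(u) u_j u_k, where each b_{ijk} is a C^1 function of u. -/
open scoped ENNReal
open MeasureTheory Matrix Set Filter Topology

noncomputable section

/-! Hadamard's lemma, applied twice. Averaging `fderiv ℝ g` over the segment from `a` to `x` gives
an operator `Q g a x`, smooth in `(a, x)`, with `g x - g a = Q g a x (x - a)`. Put `h = Q g 0`. If
`g` vanishes on the axes, then `h v v = g v = 0` for every axis vector `v`. Taking for `v_j` the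
`j`-th component `u_j e_j` of `u`, this gives
`g u = h u u = ∑ j, (h u - h v_j) v_j = ∑ j, Q h v_j u (u - v_j) v_j`,
and `u - v_j` has no `j`-th coordinate, so only the products `u_j u_k` with `j ≠ k` occur. -/

open scoped Interval

universe u

section ParametricIntegral

theorem exists_eventually_forall_norm_le {X Y G : Type*} [TopologicalSpace X]
    [TopologicalSpace Y] [SeminormedAddCommGroup G] {F : X × Y → G} {K : Set Y}
    (hK : IsCompact K) {x : X} (hF : ∀ t ∈ K, ContinuousAt F (x, t)) :
    ∃ C, ∀ᶠ y in 𝓝 x, ∀ t ∈ K, ‖F (y, t)‖ ≤ C := by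
  have hslice : ContinuousOn (fun t => F (x, t)) K := fun t ht =>
    ((hF t ht).comp (Continuous.prodMk_right x).continuousAt).continuousWithinAt
  obtain ⟨C, hC⟩ := hK.exists_bound_of_continuousOn hslice
  refine ⟨C + 1, hK.eventually_forall_of_forall_eventually fun t ht => ?_⟩
  have hlt : ‖F (x, t)‖ < C + 1 := (hC t ht).trans_lt (lt_add_one C)
  exact ((hF t ht).norm.eventually_lt_const hlt).mono fun _ => le_of_lt

theorem intervalIntegrable_of_continuousAt_prodMk {X G : Type*} [TopologicalSpace X]
    [NormedAddCommGroup G] {F : X × ℝ → G} {x : X} {a b : ℝ}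
    (hF : ∀ t ∈ [[a, b]], ContinuousAt F (x, t)) :
    IntervalIntegrable (fun t => F (x, t)) volume a b :=
  ContinuousOn.intervalIntegrable fun t ht =>
    ((hF t ht).comp (Continuous.prodMk_right x).continuousAt).continuousWithinAt

theorem continuousAt_parametric_intervalIntegral {X G : Type*} [TopologicalSpace X]
    [FirstCountableTopology X] [NormedAddCommGroup G] [NormedSpace ℝ G] {F : X × ℝ → G} {x : X}
    {a b : ℝ} (hF : ∀ᶠ y in 𝓝 x, ∀ t ∈ [[a, b]], ContinuousAt F (y, t)) :
    ContinuousAt (fun y => ∫ t in a..b, F (y, t)) x := by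
  obtain ⟨C, hC⟩ := exists_eventually_forall_norm_le isCompact_uIcc hF.self_of_nhds
  refine intervalIntegral.continuousAt_of_dominated_interval (bound := fun _ => C) ?_ ?_
    intervalIntegrable_const ?_
  · filter_upwards [hF] with y hy
    exact (intervalIntegrable_of_continuousAt_prodMk hy).aestronglyMeasurable_restrict_uIoc
  · filter_upwards [hC] with y hy
    exact Eventually.of_forall fun t ht => hy t (uIoc_subset_uIcc ht)
  · exact Eventually.of_forall fun t ht =>
      (hF.self_of_nhds t (uIoc_subset_uIcc ht)).comp (f := fun y => (y, t))
        (Continuous.prodMk_left t).continuousAt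

variable {E G : Type u} [NormedAddCommGroup E] [NormedSpace ℝ E] [NormedAddCommGroup G]
  [NormedSpace ℝ G] {F : E × ℝ → G} {x : E} {a b : ℝ}

theorem eventually_forall_contDiffAt_prodMk {n : WithTop ℕ∞} (hn : n ≠ (⊤ : ℕ∞))
    (hF : ∀ t ∈ [[a, b]], ContDiffAt ℝ n F (x, t)) :
    ∀ᶠ y in 𝓝 x, ∀ t ∈ [[a, b]], ContDiffAt ℝ n F (y, t) :=
  isCompact_uIcc.eventually_forall_of_forall_eventually fun t ht => (hF t ht).eventually hn

theorem hasFDerivAt_parametric_intervalIntegral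
    (hF : ∀ t ∈ [[a, b]], ContDiffAt ℝ 1 F (x, t)) :
    HasFDerivAt (fun y => ∫ t in a..b, F (y, t))
      (∫ t in a..b, (fderiv ℝ F (x, t)).comp (.inl ℝ E ℝ)) x := by
  let F' : E × ℝ → E →L[ℝ] G := fun p => (fderiv ℝ F p).comp (.inl ℝ E ℝ)
  have hF' : ∀ t ∈ [[a, b]], ContinuousAt F' (x, t) := fun t ht =>
    ((hF t ht).continuousAt_fderiv one_ne_zero).clm_comp continuousAt_const
  have hnear := eventually_forall_contDiffAt_prodMk (by simp) hF
  obtain ⟨C, hC⟩ := exists_eventually_forall_norm_le isCompact_uIcc hF'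
  refine intervalIntegral.hasFDerivAt_integral_of_dominated_of_fderiv_le (bound := fun _ => C)
    (F' := fun y t => F' (y, t)) (hnear.and hC) ?_ ?_ ?_ ?_ intervalIntegrable_const ?_
  · filter_upwards [hnear] with y hy
    exact (intervalIntegrable_of_continuousAt_prodMk fun t ht =>
      (hy t ht).continuousAt).aestronglyMeasurable_restrict_uIoc
  · exact intervalIntegrable_of_continuousAt_prodMk fun t ht => (hF t ht).continuousAt
  · exact (intervalIntegrable_of_continuousAt_prodMk hF').aestronglyMeasurable_restrict_uIoc
  · exact Eventually.of_forall fun t ht y hy => hy.2 t (uIoc_subset_uIcc ht)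
  · refine Eventually.of_forall fun t ht y hy => ?_
    exact ((hy.1 t (uIoc_subset_uIcc ht)).differentiableAt one_ne_zero).hasFDerivAt.comp y
      (hasFDerivAt_prodMk_left y t)

theorem contDiffAt_nat_parametric_intervalIntegral (m : ℕ)
    (hF : ∀ t ∈ [[a, b]], ContDiffAt ℝ m F (x, t)) :
    ContDiffAt ℝ m (fun y => ∫ t in a..b, F (y, t)) x := by
  induction m generalizing G with
  | zero =>
    have hnear := eventually_forall_contDiffAt_prodMk (by simp) hF
    refine contDiffAt_zero.2 ⟨_, hnear.eventually_nhds, fun y hy => ?_⟩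
    exact (continuousAt_parametric_intervalIntegral
      (hy.mono fun z hz t ht => (hz t ht).continuousAt)).continuousWithinAt
  | succ m ih =>
    have hnear := eventually_forall_contDiffAt_prodMk (by simp) hF
    refine contDiffAt_succ_iff_hasFDerivAt.2
      ⟨fun y => ∫ t in a..b, (fderiv ℝ F (y, t)).comp (.inl ℝ E ℝ), ⟨_, hnear, fun y hy => ?_⟩, ?_⟩
    · exact hasFDerivAt_parametric_intervalIntegral fun t ht => (hy t ht).of_le (by simp)
    · exact ih (F := fun p => (fderiv ℝ F p).comp (.inl ℝ E ℝ)) fun t ht =>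
        ((hF t ht).fderiv_right (by simp)).clm_comp contDiffAt_const

theorem contDiffAt_parametric_intervalIntegral {m : ℕ∞}
    (hF : ∀ t ∈ [[a, b]], ContDiffAt ℝ m F (x, t)) :
    ContDiffAt ℝ m (fun y => ∫ t in a..b, F (y, t)) x :=
  contDiffWithinAt_iff_forall_nat_le.2 fun k hk =>
    contDiffAt_nat_parametric_intervalIntegral k fun t ht => (hF t ht).of_le (mod_cast hk)

end ParametricIntegral

section Hadamard

variable {E G : Type u} [NormedAddCommGroup E] [NormedSpace ℝ E] [NormedAddCommGroup G]
  [NormedSpace ℝ G]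

/-- The average of the derivative of `g` over the segment from `a` to `x`. It is the operator
`Q` of Hadamard's lemma, `g x - g a = Q (x - a)`, called the Hadamard quotient of `g` from `a` to
`x`. Its value is `0` when the derivative is not integrable along the segment. -/
def segmentAvgFDeriv (g : E → G) (a x : E) : E →L[ℝ] G :=
  ∫ t in (0 : ℝ)..1, fderiv ℝ g (a + t • (x - a))

theorem add_smul_sub_mem_segment {a x : E} {t : ℝ} (ht : t ∈ [[(0 : ℝ), 1]]) :
    a + t • (x - a) ∈ segment ℝ a x := by
  rw [uIcc_of_le zero_le_one] at ht
  rw [segment_eq_image']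
  exact mem_image_of_mem _ ht

theorem sub_eq_segmentAvgFDeriv_apply [CompleteSpace G] {g : E → G} {a x : E}
    (hg : ∀ z ∈ segment ℝ a x, ContDiffAt ℝ 1 g z) :
    g x - g a = segmentAvgFDeriv g a x (x - a) := by
  have hderiv : ∀ t ∈ [[(0 : ℝ), 1]], HasDerivAt (fun t => g (a + t • (x - a)))
      (fderiv ℝ g (a + t • (x - a)) (x - a)) t := fun t ht => by
    have hline : HasDerivAt (fun t : ℝ => a + t • (x - a)) (x - a) t := by
      simpa only [one_smul] using ((hasDerivAt_id' t).smul_const (x - a)).const_add a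
    exact ((hg _ (add_smul_sub_mem_segment ht)).differentiableAt
      one_ne_zero).hasFDerivAt.comp_hasDerivAt t hline
  have hcont : ContinuousOn (fun t : ℝ => fderiv ℝ g (a + t • (x - a))) [[0, 1]] := fun t ht =>
    (((hg _ (add_smul_sub_mem_segment ht)).continuousAt_fderiv one_ne_zero).comp
      (f := fun t : ℝ => a + t • (x - a)) (by fun_prop)).continuousWithinAt
  rw [segmentAvgFDeriv, ContinuousLinearMap.intervalIntegral_apply hcont.intervalIntegrable,
    intervalIntegral.integral_eq_sub_of_hasDerivAt hderiv
      (hcont.clm_apply continuousOn_const).intervalIntegrable]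
  simp only [one_smul, zero_smul, add_sub_cancel, add_zero]

theorem contDiffAt_segmentAvgFDeriv {g : E → G} {a x : E} {m : ℕ∞}
    (hg : ∀ z ∈ segment ℝ a x, ContDiffAt ℝ (m + 1) g z) :
    ContDiffAt ℝ m (fun p : E × E => segmentAvgFDeriv g p.1 p.2) (a, x) :=
  contDiffAt_parametric_intervalIntegral
    (F := fun q : (E × E) × ℝ => fderiv ℝ g (q.1.1 + q.2 • (q.1.2 - q.1.1))) fun t ht =>
    ((hg _ (add_smul_sub_mem_segment ht)).fderiv_right le_rfl).comp ((a, x), t)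
      (f := fun q : (E × E) × ℝ => q.1.1 + q.2 • (q.1.2 - q.1.1)) (by fun_prop)

theorem contDiffOn_segmentAvgFDeriv {g : E → G} {U : Set E} (hU : IsOpen U) (hconv : Convex ℝ U)
    {m : ℕ∞} (hg : ContDiffOn ℝ (m + 1) g U) :
    ContDiffOn ℝ m (fun p : E × E => segmentAvgFDeriv g p.1 p.2) (U ×ˢ U) := fun _ hp =>
  (contDiffAt_segmentAvgFDeriv fun _ hz => hg.contDiffAt
    (hU.mem_nhds (hconv.segment_subset hp.1 hp.2 hz))).contDiffWithinAt

theorem contDiffOn_segmentAvgFDeriv_right {g : E → G} {U : Set E} (hU : IsOpen U)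
    (hconv : Convex ℝ U) {m : ℕ∞} (hg : ContDiffOn ℝ (m + 1) g U) {a : E} (ha : a ∈ U) :
    ContDiffOn ℝ m (segmentAvgFDeriv g a) U :=
  (contDiffOn_segmentAvgFDeriv hU hconv hg).comp (contDiffOn_const.prodMk contDiffOn_id)
    fun _ hx => ⟨ha, hx⟩

end Hadamard

section AxisVanishing

variable {ι G : Type u} [Fintype ι] [DecidableEq ι] [NormedAddCommGroup G] [NormedSpace ℝ G]

/-- The coefficient of `u j * u k`, for `j ≠ k`, in the representation of a function `g` that
vanishes on the coordinate axes: the Hadamard quotient, from `u j * e_j` to `u`, of the Hadamard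
quotient of `g` from the origin, evaluated at `e_k` and then at `e_j`. -/
def crossCoeff (g : (ι → ℝ) → G) (j k : ι) (u : ι → ℝ) : G :=
  segmentAvgFDeriv (segmentAvgFDeriv g 0) (Pi.single j (u j)) u (Pi.single k 1) (Pi.single j 1)

theorem sub_single_eq_sum (u : ι → ℝ) (j : ι) :
    u - Pi.single j (u j) = ∑ k, if j = k then 0 else u k • Pi.single k (1 : ℝ) := by
  ext i
  rw [Finset.sum_apply, Finset.sum_eq_single i]
  · by_cases hji : j = i
    · simp [hji]
    · simp [hji, Ne.symm hji]
  · intro k _ hki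
    split_ifs <;> simp [hki.symm]
  · simp

theorem apply_single_eq_sum_smul_of_apply_self_eq_zero [CompleteSpace G]
    {h : (ι → ℝ) → (ι → ℝ) →L[ℝ] G} {u : ι → ℝ} {j : ι}
    (hh : ∀ z ∈ segment ℝ (Pi.single j (u j)) u, ContDiffAt ℝ 1 h z)
    (hvanish : h (Pi.single j (u j)) (Pi.single j (u j)) = 0) :
    h u (Pi.single j (u j)) = ∑ k, if j = k then 0 else (u j * u k) •
      segmentAvgFDeriv h (Pi.single j (u j)) u (Pi.single k 1) (Pi.single j 1) := by
  calc h u (Pi.single j (u j))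
      = (h u - h (Pi.single j (u j))) (Pi.single j (u j)) := by
        rw [_root_.sub_apply, hvanish, sub_zero]
    _ = segmentAvgFDeriv h (Pi.single j (u j)) u (u - Pi.single j (u j))
          (u j • Pi.single j (1 : ℝ)) := by
        rw [sub_eq_segmentAvgFDeriv_apply hh, ← Pi.single_smul, smul_eq_mul, mul_one]
    _ = _ := by
        rw [sub_single_eq_sum, map_sum, _root_.sum_apply]
        refine Finset.sum_congr rfl fun k _ => ?_
        split_ifs with hjk
        · simp
        · simp [mul_smul]

variable {g : (ι → ℝ) → G} {U : Set (ι → ℝ)}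

theorem contDiffOn_crossCoeff {m : ℕ∞} (hU : IsOpen U) (hconv : Convex ℝ U)
    (hzero : 0 ∈ U) (hproj : ∀ u ∈ U, ∀ j, Pi.single j (u j) ∈ U)
    (hg : ContDiffOn ℝ (m + 1 + 1) g U) (j k : ι) :
    ContDiffOn ℝ m (crossCoeff g j k) U := by
  have hquot := contDiffOn_segmentAvgFDeriv hU hconv
    (contDiffOn_segmentAvgFDeriv_right hU hconv (m := m + 1) (mod_cast hg) hzero)
  have hpair : ContDiff ℝ m fun u : ι → ℝ => ((Pi.single j (u j) : ι → ℝ), u) :=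
    (((ContinuousLinearMap.single ℝ (fun _ : ι => ℝ) j).contDiff).comp
      (contDiff_apply ℝ ℝ j)).prodMk contDiff_id
  exact ((hquot.comp hpair.contDiffOn fun u hu => ⟨hproj u hu j, hu⟩).clm_apply
    contDiffOn_const).clm_apply contDiffOn_const

theorem eq_sum_smul_crossCoeff [CompleteSpace G] [Nonempty ι] (hU : IsOpen U) (hconv : Convex ℝ U)
    (hzero : 0 ∈ U) (hproj : ∀ u ∈ U, ∀ j, Pi.single j (u j) ∈ U)
    (hg : ContDiffOn ℝ 2 g U) (haxis : ∀ j s, Pi.single j s ∈ U → g (Pi.single j s) = 0)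
    {u : ι → ℝ} (hu : u ∈ U) :
    g u = ∑ j, ∑ k, if j = k then 0 else (u j * u k) • crossCoeff g j k u := by
  have hquot : ContDiffOn ℝ 1 (segmentAvgFDeriv g 0) U :=
    contDiffOn_segmentAvgFDeriv_right hU hconv (m := 1) (by norm_num [hg]) hzero
  have hg0 : g 0 = 0 := by
    have hj := haxis (Classical.arbitrary ι) 0
    rw [Pi.single_zero] at hj
    exact hj hzero
  have hself : ∀ v ∈ U, g v = segmentAvgFDeriv g 0 v v := fun v hv => by
    simpa only [hg0, sub_zero] using sub_eq_segmentAvgFDeriv_apply fun z hz =>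
      (hg.contDiffAt (hU.mem_nhds (hconv.segment_subset hzero hv hz))).of_le one_le_two
  calc g u = ∑ j, segmentAvgFDeriv g 0 u (Pi.single j (u j)) := by
        rw [← map_sum, Finset.univ_sum_single, hself u hu]
    _ = _ := Finset.sum_congr rfl fun j _ => by
        have hv := hproj u hu j
        refine apply_single_eq_sum_smul_of_apply_self_eq_zero (fun z hz =>
          hquot.contDiffAt (hU.mem_nhds (hconv.segment_subset hv hu hz))) ?_
        rw [← hself _ hv, haxis j _ hv]

end AxisVanishing

section EuclideanBall

variable {n : ℕ}

theorem eunorm_eq_norm_toLp (v : V n) : eunorm v = ‖WithLp.toLp 2 v‖ := by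
  simp [eunorm, EuclideanSpace.norm_eq]

theorem eunorm_single (j : Fin n) (s : ℝ) : eunorm (Pi.single j s) = |s| := by
  simp [eunorm_eq_norm_toLp]

theorem abs_apply_le_eunorm (v : V n) (j : Fin n) : |v j| ≤ eunorm v := by
  rw [eunorm_eq_norm_toLp]
  exact PiLp.norm_apply_le (WithLp.toLp 2 v) j

theorem continuous_eunorm : Continuous (eunorm : V n → ℝ) := by
  unfold eunorm
  fun_prop

theorem convex_setOf_eunorm_lt (δ : ℝ) : Convex ℝ {v : V n | eunorm v < δ} := by
  have hpreimage : {v : V n | eunorm v < δ} =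
      (WithLp.linearEquiv 2 ℝ (V n)).symm.toLinearMap ⁻¹' Metric.ball 0 δ := by
    ext v
    simp [eunorm_eq_norm_toLp]
  rw [hpreimage]
  exact (convex_ball 0 δ).linear_preimage _

theorem smul_eb (j : Fin n) (s : ℝ) : s • eb j = Pi.single j s := by
  rw [eb, ← Pi.single_smul, smul_eq_mul, mul_one]

end EuclideanBall

theorem HypSys.contDiffOn_bcoef {n : ℕ} (S : HypSys n) (i : Fin n) :
    ContDiffOn ℝ (⊤ : ℕ∞) (S.bcoef i) {u | eunorm u < S.δ} := by
  unfold HypSys.bcoef dotProduct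
  exact ContDiffOn.sum fun j _ =>
    (contDiffOn_pi.1 (S.smooth_l i) j).mul (contDiffOn_pi.1 S.smooth_B j)

theorem HypSys.Matching.bcoef_single {n : ℕ} {S : HypSys n} (hMatch : S.Matching) (i j : Fin n)
    {s : ℝ} (hs : |s| < S.δ) : S.bcoef i (Pi.single j s) = 0 := by
  rw [HypSys.bcoef, ← smul_eb, hMatch j s hs, dotProduct_zero]

theorem stmt15_general {n : ℕ} (S : HypSys n) (hMatch : S.Matching) :
    ∃ bfun : Fin n → Fin n → Fin n → V n → ℝ,
      (∀ i j k : Fin n, ContDiffOn ℝ (⊤ : ℕ∞) (bfun i j k) {u : V n | eunorm u < S.δ}) ∧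
      ∀ u : V n, eunorm u < S.δ → ∀ i : Fin n,
        S.bcoef i u = ∑ j : Fin n, ∑ k : Fin n,
          if j = k then 0 else bfun i j k u * u j * u k := by
  have hU : IsOpen {u : V n | eunorm u < S.δ} := isOpen_lt continuous_eunorm continuous_const
  have hconv := convex_setOf_eunorm_lt (n := n) S.δ
  have hzero : (0 : V n) ∈ {u : V n | eunorm u < S.δ} := by simpa [eunorm] using S.δ_pos
  have hproj : ∀ u ∈ {u : V n | eunorm u < S.δ}, ∀ j,
      Pi.single j (u j) ∈ {u : V n | eunorm u < S.δ} := fun u hu j =>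
    (eunorm_single j (u j)).trans_le (abs_apply_le_eunorm u j) |>.trans_lt hu
  refine ⟨fun i => crossCoeff (S.bcoef i), fun i => contDiffOn_crossCoeff hU hconv hzero hproj
    (S.contDiffOn_bcoef i), fun u hu i => ?_⟩
  have : Nonempty (Fin n) := ⟨i⟩
  have haxis : ∀ j s, Pi.single j s ∈ {u : V n | eunorm u < S.δ} →
      S.bcoef i (Pi.single j s) = 0 := fun j s hs =>
    hMatch.bcoef_single i j ((eunorm_single j s).symm.trans_lt hs)
  have hsmooth : ContDiffOn ℝ 2 (S.bcoef i) {u | eunorm u < S.δ} :=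
    (S.contDiffOn_bcoef i).of_le (WithTop.coe_le_coe.2 le_top)
  rw [eq_sum_smul_crossCoeff hU hconv hzero hproj hsmooth haxis hu]
  refine Finset.sum_congr rfl fun j _ => Finset.sum_congr rfl fun k _ => ?_
  rw [smul_eq_mul, mul_comm, mul_assoc]

/-- **The representation (2.22) of the inhomogeneous term**.  In normalized
coordinates, if `B` satisfies the matching condition, then for each `i` and
all `|u|` small, `b_i(u) = l_i(u)B(u)` can be written as
`b_i(u) = Σ_{j≠k} b_{ijk}(u) u_j u_k` with `C¹` functions `b_{ijk}`. -/
theorem stmt15 {n : ℕ} (S : HypSys n) (hNorm : S.Normalized) (hMatch : S.Matching) :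
    ∃ δ' : ℝ, 0 < δ' ∧ δ' ≤ S.δ ∧
    ∃ bfun : Fin n → Fin n → Fin n → V n → ℝ,
      (∀ i j k : Fin n, ContDiffOn ℝ 1 (bfun i j k) {u : V n | eunorm u < δ'}) ∧
      ∀ u : V n, eunorm u < δ' → ∀ i : Fin n,
        S.bcoef i u = ∑ j : Fin n, ∑ k : Fin n,
          if j = k then 0 else bfun i j k u * u j * u k := by
  obtain ⟨bfun, hsmooth, hrep⟩ := stmt15_general S hMatch
  exact ⟨S.δ, S.δ_pos, le_rfl, bfun, fun i j k => (hsmooth i j k).of_le (mod_cast le_top), hrep⟩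
end
end
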